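/- Let μ_1 and μ_2 be probability measures on ℝ^d, let r > 0, α_1, α_2 > 0 and K > 1. Let C_{K,d} = (8/Γ(d/2))·(d/(2e))^{d/2}·(1 + 1/(2K²)). Suppose that for all t ∈ [r/√2, K·α_1^{−1/2}·α_2^{−1/2}·r] and for i ∈ {1, 2} we have s_t(μ_i) ≤ α_i. Then s_r(μ_1 * μ_2) ≤ C_{K,d} · α_1 · α_2. -/

import Mathlib

open MeasureTheory Real

/-- Density of the centered Gaussian on `ℝ^d` with covariance matrix `y • I`. -/
noncomputable def gaussD (d : ℕ) (y : ℝ) (x : EuclideanSpace ℝ (Fin d)) : ℝ :=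
  (2 * Real.pi * y) ^ (-(d : ℝ) / 2) * Real.exp (-‖x‖ ^ 2 / (2 * y))

/-- `∂/∂y n_y (x)`. -/
noncomputable def gaussDy (d : ℕ) (y : ℝ) (x : EuclideanSpace ℝ (Fin d)) : ℝ :=
  deriv (fun u => gaussD d u x) y

/-- The detail of a measure `μ` on `ℝ^d` around the scale `r`,
`s_r(μ) = r² (Γ(d/2)/2) (d/(2e))^{-d/2} ‖μ * ∂/∂y n_y |_{y = r²}‖₁`. -/
noncomputable def detail (d : ℕ) (μ : Measure (EuclideanSpace ℝ (Fin d))) (r : ℝ) : ℝ :=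
  r ^ 2 * (Real.Gamma ((d : ℝ) / 2) / 2) * ((d : ℝ) / (2 * Real.exp 1)) ^ (-(d : ℝ) / 2) *
    ∫ x, |∫ z, gaussDy d (r ^ 2) (x - z) ∂μ|

/-!
Write `n_y` for the Gaussian density and `∂` for `∂/∂y`. Since `n_u ⋆ n_v = n_{u+v}`,
differentiating once in `u` and once in `v` gives `∂²n_y = ∂n_{y/2} ⋆ ∂n_{y/2}`, so `‖(μ₁ * μ₂) *
∂²n_y‖₁` is at most the product of the norms `‖μᵢ * ∂n_{y/2}‖₁`, that is, a constant multiple of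
`y⁻²` times the product of the details of `μ₁` and `μ₂` at scale `√(y/2)`. Let `S` be the largest
scale at which the details are assumed to be small. Integrating over `y` from `r²` to `2S²` bounds
the detail of `μ₁ * μ₂` at scale `r` by a multiple of `α₁α₂` plus `r²/(2S²)` times its detail at
scale `√2 S`, which is at most the total mass because the detail is normalized so that the point
mass at `0` has detail `1`. The inequality `Γ(d/2) ≤ 8 (d/(2e))^(d/2)` absorbs the last term into
the constant.
-/

open Set Filter Polynomial ContinuousLinearMap
open scoped Topology Convolution

section MinkowskiAndFTC

variable {X Y E : Type*} [MeasurableSpace X] [MeasurableSpace Y]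
  [NormedAddCommGroup E] [NormedSpace ℝ E] {m : Measure X} {ν : Measure Y} [SFinite m] [SFinite ν]

lemma integral_norm_integral_le {f : X → Y → E} (hf : Integrable (Function.uncurry f) (m.prod ν)) :
    ∫ x, ‖∫ y, f x y ∂ν‖ ∂m ≤ ∫ y, ∫ x, ‖f x y‖ ∂m ∂ν :=
  calc ∫ x, ‖∫ y, f x y ∂ν‖ ∂m
      ≤ ∫ x, ∫ y, ‖f x y‖ ∂ν ∂m :=
        integral_mono hf.integral_prod_left.norm hf.norm.integral_prod_left
          fun _ => norm_integral_le_integral_norm _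
    _ = ∫ y, ∫ x, ‖f x y‖ ∂m ∂ν := integral_integral_swap hf.norm

lemma integral_norm_le_add_of_hasDerivAt [CompleteSpace E] {f f' : ℝ → X → E} {B : ℝ → ℝ} {a b : ℝ}
    (hab : a ≤ b) (hderiv : ∀ x, ∀ y ∈ Icc a b, HasDerivAt (f · x) (f' y x) y)
    (hcont : ∀ x, ContinuousOn (f' · x) (Icc a b))
    (hmeas : AEStronglyMeasurable (fun p : X × ℝ => f' p.2 p.1)
      (m.prod (volume.restrict (Ioc a b))))
    (hfa : Integrable (f a) m) (hfb : Integrable (f b) m)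
    (hf' : ∀ y ∈ Ioc a b, Integrable (f' y) m) (hB : IntegrableOn B (Ioc a b))
    (hle : ∀ y ∈ Ioc a b, ∫ x, ‖f' y x‖ ∂m ≤ B y) :
    ∫ x, ‖f a x‖ ∂m ≤ ∫ x, ‖f b x‖ ∂m + ∫ y in Ioc a b, B y := by
  have hprod : Integrable (fun p : X × ℝ => f' p.2 p.1) (m.prod (volume.restrict (Ioc a b))) := by
    refine (integrable_prod_iff' hmeas).2 ⟨?_, hB.mono' ?_ ?_⟩
    · exact ae_restrict_of_forall_mem measurableSet_Ioc hf'
    · exact hmeas.norm.prod_swap.integral_prod_right'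
    · refine ae_restrict_of_forall_mem measurableSet_Ioc fun y hy => ?_
      rw [Real.norm_of_nonneg (integral_nonneg fun _ => norm_nonneg _)]
      exact hle y hy
  have hFTC (x : X) : ∫ y in Ioc a b, f' y x = f b x - f a x := by
    rw [← intervalIntegral.integral_of_le hab]
    rw [← uIcc_of_le hab] at hderiv hcont
    exact intervalIntegral.integral_eq_sub_of_hasDerivAt (hderiv x) (hcont x).intervalIntegrable
  calc ∫ x, ‖f a x‖ ∂m
      ≤ ∫ x, (‖f b x‖ + ‖∫ y in Ioc a b, f' y x‖) ∂m := by
        refine integral_mono hfa.norm (hfb.norm.add hprod.integral_prod_left.norm) fun x => ?_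
        simpa only [hFTC, sub_sub_cancel] using norm_sub_le (f b x) (f b x - f a x)
    _ = ∫ x, ‖f b x‖ ∂m + ∫ x, ‖∫ y in Ioc a b, f' y x‖ ∂m :=
        integral_add hfb.norm hprod.integral_prod_left.norm
    _ ≤ ∫ x, ‖f b x‖ ∂m + ∫ y in Ioc a b, ∫ x, ‖f' y x‖ ∂m :=
        add_le_add_right (integral_norm_integral_le hprod) _
    _ ≤ ∫ x, ‖f b x‖ ∂m + ∫ y in Ioc a b, B y :=
        add_le_add_right
          (setIntegral_mono_on hprod.norm.integral_prod_right hB measurableSet_Ioc hle) _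

end MinkowskiAndFTC

section Mollify

variable {G E : Type*} [AddCommGroup G] [MeasurableSpace G]
  [NormedAddCommGroup E] [NormedSpace ℝ E]

/-- The convolution `f * μ` of a function with a measure. It is kept separate from Mathlib's
convolution of two functions because `μ` need not have a density. -/
noncomputable def mollify (f : G → E) (μ : Measure G) (x : G) : E := ∫ z, f (x - z) ∂μ

lemma mollify_eq_convolution (f : G → ℝ) (μ : Measure G) :
    mollify f μ = (fun _ => 1) ⋆[mul ℝ ℝ, μ] f := by
  funext x
  simp only [mollify, convolution_mul, one_mul]

variable [MeasurableAdd₂ G] [MeasurableNeg G] {m μ ν : Measure G} [SFinite m]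
  [IsFiniteMeasure μ] [IsFiniteMeasure ν]

lemma integrable_prod_comp_sub [m.IsAddRightInvariant] {f : G → E} (hf : Integrable f m) :
    Integrable (fun p : G × G => f (p.1 - p.2)) (m.prod μ) := by
  simpa only [lsmul_apply, one_smul] using
    (integrable_const (1 : ℝ)).convolution_integrand (lsmul ℝ ℝ) hf

lemma integrable_mollify [m.IsAddRightInvariant] {f : G → E} (hf : Integrable f m) :
    Integrable (mollify f μ) m :=
  (integrable_prod_comp_sub hf).integral_prod_left

lemma integral_norm_mollify_le [m.IsAddRightInvariant] {f : G → E} (hf : Integrable f m) :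
    ∫ x, ‖mollify f μ x‖ ∂m ≤ μ.real univ * ∫ x, ‖f x‖ ∂m :=
  calc ∫ x, ‖mollify f μ x‖ ∂m
      ≤ ∫ z, ∫ x, ‖f (x - z)‖ ∂m ∂μ := integral_norm_integral_le (integrable_prod_comp_sub hf)
    _ = ∫ _z, ∫ x, ‖f x‖ ∂m ∂μ := by
        simp only [integral_sub_right_eq_self (fun x => ‖f x‖)]
    _ = μ.real univ * ∫ x, ‖f x‖ ∂m := by rw [integral_const, smul_eq_mul]

lemma mollify_conv {f : G → E} (hf : StronglyMeasurable f) {M : ℝ} (hM : ∀ x, ‖f x‖ ≤ M) :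
    mollify f (μ ∗ ν) = mollify (mollify f ν) μ := by
  funext x
  have hint : Integrable (fun z => f (x - z)) (μ ∗ ν) :=
    .of_bound (hf.comp_measurable (measurable_const_sub x)).aestronglyMeasurable M
      (.of_forall fun z => hM (x - z))
  simp only [mollify, integral_conv hint, sub_sub]

lemma mollify_convolution_right {f g : G → ℝ} (hf : Integrable f m) (hg : StronglyMeasurable g)
    {M : ℝ} (hM : ∀ x, ‖g x‖ ≤ M) :
    mollify (f ⋆[mul ℝ ℝ, m] g) μ = f ⋆[mul ℝ ℝ, m] mollify g μ := by
  funext x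
  have hprod : Integrable (fun p : G × G => f p.2 * g (x - p.1 - p.2)) (μ.prod m) :=
    hf.comp_snd μ |>.mul_bdd (hg.comp_measurable (by fun_prop)).aestronglyMeasurable
      (.of_forall fun p => hM _)
  simp only [mollify, convolution_mul, ← integral_const_mul]
  rw [integral_integral_swap (f := fun z t => f t * g (x - z - t)) hprod]
  simp only [fun z t => sub_right_comm x z t]

lemma integral_norm_convolution_mul_le [m.IsAddRightInvariant] {f g : G → ℝ}
    (hf : Integrable f m) (hg : Integrable g m) :
    ∫ x, ‖(f ⋆[mul ℝ ℝ, m] g) x‖ ∂m ≤ (∫ x, ‖f x‖ ∂m) * ∫ x, ‖g x‖ ∂m :=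
  calc ∫ x, ‖(f ⋆[mul ℝ ℝ, m] g) x‖ ∂m
      ≤ ∫ t, ∫ x, ‖f t * g (x - t)‖ ∂m ∂m :=
        integral_norm_integral_le (hf.convolution_integrand (mul ℝ ℝ) hg)
    _ = (∫ x, ‖f x‖ ∂m) * ∫ x, ‖g x‖ ∂m := by
        simp only [norm_mul, integral_const_mul, integral_sub_right_eq_self (fun x => ‖g x‖),
          integral_mul_const]

omit [SFinite m] in
lemma convolution_mul_comm [m.IsAddLeftInvariant] [m.IsNegInvariant] (f g : G → ℝ) :
    f ⋆[mul ℝ ℝ, m] g = g ⋆[mul ℝ ℝ, m] f := by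
  funext x
  simp only [convolution_mul_swap (f := f), convolution_mul, mul_comm]

lemma stronglyMeasurable_convolution_mul {f g : G → ℝ} (hf : StronglyMeasurable f)
    (hg : StronglyMeasurable g) : StronglyMeasurable (f ⋆[mul ℝ ℝ, m] g) :=
  StronglyMeasurable.integral_prod_right' (f := fun p : G × G => f p.2 * g (p.1 - p.2))
    ((hf.comp_measurable measurable_snd).mul (hg.comp_measurable measurable_sub))

omit [MeasurableAdd₂ G] [MeasurableNeg G] [SFinite m] in
lemma norm_convolution_mul_le {f g : G → ℝ} (hf : Integrable f m) {M : ℝ} (hM : ∀ x, ‖g x‖ ≤ M)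
    (x : G) : ‖(f ⋆[mul ℝ ℝ, m] g) x‖ ≤ (∫ t, ‖f t‖ ∂m) * M := by
  rw [convolution_mul, ← integral_mul_const]
  refine norm_integral_le_of_norm_le (hf.norm.mul_const M) (.of_forall fun t => ?_)
  rw [norm_mul]
  exact mul_le_mul_of_nonneg_left (hM _) (norm_nonneg _)

lemma mollify_convolution_conv [m.IsAddLeftInvariant] [m.IsNegInvariant]
    {f g : G → ℝ} (hf : Integrable f m) (hg : Integrable g m) (hfm : StronglyMeasurable f)
    (hgm : StronglyMeasurable g) {Mf Mg : ℝ} (hfM : ∀ x, ‖f x‖ ≤ Mf) (hgM : ∀ x, ‖g x‖ ≤ Mg) :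
    mollify (f ⋆[mul ℝ ℝ, m] g) (μ ∗ ν) = mollify f μ ⋆[mul ℝ ℝ, m] mollify g ν := by
  rw [mollify_conv (stronglyMeasurable_convolution_mul hfm hgm) (norm_convolution_mul_le hf hgM),
    mollify_convolution_right hf hgm hgM, convolution_mul_comm,
    mollify_convolution_right (integrable_mollify hg) hfm hfM, convolution_mul_comm]

end Mollify

section GammaFunction

lemma Gamma_add_half_le {x : ℝ} (hx : 0 < x) : Gamma (x + 1 / 2) ≤ √x * Gamma x := by
  have hconvex := Gamma_mul_add_mul_le_rpow_Gamma_mul_rpow_Gamma hx (by linarith : 0 < x + 1)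
    one_half_pos one_half_pos (add_halves 1)
  have hΓ := Gamma_pos_of_pos hx
  calc Gamma (x + 1 / 2) = Gamma (1 / 2 * x + 1 / 2 * (x + 1)) := by ring_nf
    _ ≤ √(Gamma x) * √(Gamma (x + 1)) := by simpa only [sqrt_eq_rpow] using hconvex
    _ = √x * Gamma x := by
        rw [Gamma_add_one hx.ne', sqrt_mul hx.le, mul_left_comm, mul_self_sqrt hΓ.le]

lemma sqrt_mul_div_exp_rpow_self_le {x : ℝ} (hx : 0 < x) :
    √x * (x / exp 1) ^ x ≤ ((x + 1 / 2) / exp 1) ^ (x + 1 / 2) := by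
  have hlog : log x - log (x + 1 / 2) ≤ x / (x + 1 / 2) - 1 := by
    rw [← log_div (by positivity) (by positivity)]
    exact log_le_sub_one_of_pos (by positivity)
  have hmul : (x + 1 / 2) * (log x - log (x + 1 / 2)) ≤ -(1 / 2) :=
    (mul_le_mul_of_nonneg_left hlog (by positivity)).trans_eq (by field_simp; ring)
  rw [← log_le_log_iff (by positivity) (by positivity), log_mul (by positivity) (by positivity),
    log_sqrt hx.le, log_rpow (by positivity), log_rpow (by positivity),
    log_div (by positivity) (by positivity), log_div (by positivity) (by positivity), log_exp]
  linarith

/- Log-convexity propagates the bound from `x` to `x + 1 / 2`, and at `x = 1 / 2` it is the equality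
`Γ(1 / 2) = √π`; this is where the constant comes from. -/
lemma Gamma_natCast_div_two_le {n : ℕ} (hn : 1 ≤ n) :
    Gamma (n / 2) ≤ √(2 * π * exp 1) * ((n : ℝ) / (2 * exp 1)) ^ ((n : ℝ) / 2) := by
  induction n, hn using Nat.le_induction with
  | base =>
    refine le_of_eq ?_
    rw [Nat.cast_one, Gamma_one_half_eq, ← sqrt_eq_rpow, ← sqrt_mul (by positivity)]
    field_simp
  | succ n hn ih =>
    have hn0 : (0 : ℝ) < n / 2 := by positivity
    rw [← div_div] at ih
    calc Gamma ((n + 1 : ℕ) / 2) = Gamma (n / 2 + 1 / 2) := by push_cast; ring_nf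
      _ ≤ √(n / 2) * Gamma (n / 2) := Gamma_add_half_le hn0
      _ ≤ √(n / 2) * (√(2 * π * exp 1) * ((n : ℝ) / 2 / exp 1) ^ ((n : ℝ) / 2)) := by gcongr
      _ = √(2 * π * exp 1) * (√(n / 2) * ((n : ℝ) / 2 / exp 1) ^ ((n : ℝ) / 2)) := by ring
      _ ≤ √(2 * π * exp 1) * (((n : ℝ) / 2 + 1 / 2) / exp 1) ^ ((n : ℝ) / 2 + 1 / 2) := by
        gcongr
        exact sqrt_mul_div_exp_rpow_self_le hn0
      _ = _ := by push_cast; ring_nf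

lemma sqrt_two_mul_pi_mul_exp_one_le : √(2 * π * exp 1) ≤ 8 := by
  rw [sqrt_le_left (by norm_num)]
  nlinarith [pi_pos, pi_lt_four, exp_pos 1, exp_one_lt_three]

lemma hasDerivAt_rpow_mul_exp_neg (a : ℝ) {s : ℝ} (hs : 0 < s) :
    HasDerivAt (fun t => t ^ a * exp (-t)) (s ^ (a - 1) * exp (-s) * (a - s)) s := by
  refine ((hasDerivAt_rpow_const (Or.inl hs.ne')).mul (hasDerivAt_neg s).exp).congr_deriv ?_
  rw [rpow_sub_one hs.ne']
  field_simp
  ring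

lemma integrableOn_rpow_mul_exp_neg_mul_sub {a : ℝ} (ha : 0 < a) :
    IntegrableOn (fun s => s ^ (a - 1) * exp (-s) * (a - s)) (Ioi 0) := by
  have hΓ := GammaIntegral_convergent ha
  have hΓ' := GammaIntegral_convergent (add_pos ha one_pos)
  refine IntegrableOn.congr_fun ((hΓ.const_mul a).sub hΓ') (fun s hs => ?_) measurableSet_Ioi
  have hs0 : 0 < s := hs
  simp only [Pi.sub_apply, add_sub_cancel_right]
  rw [rpow_sub_one hs0.ne']
  field_simp

lemma integral_rpow_mul_exp_neg_mul_abs_sub {a : ℝ} (ha : 0 < a) :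
    ∫ s in Ioi 0, s ^ (a - 1) * exp (-s) * |s - a| = 2 * (a ^ a * exp (-a)) := by
  have hint := integrableOn_rpow_mul_exp_neg_mul_sub ha
  have hint_left := hint.mono_set (Ioc_subset_Ioi_self : Ioc 0 a ⊆ Ioi 0)
  have hint_right := hint.mono_set (Ioi_subset_Ioi ha.le)
  have hcont : Continuous fun s : ℝ => s ^ a * exp (-s) := by fun_prop (disch := exact ha.le)
  have hleft : ∫ s in Ioc 0 a, s ^ (a - 1) * exp (-s) * |s - a| = a ^ a * exp (-a) := by
    have hsign : EqOn (fun s : ℝ => s ^ (a - 1) * exp (-s) * |s - a|)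
        (fun s => s ^ (a - 1) * exp (-s) * (a - s)) (Ioc 0 a) := fun s hs => by
      simp only [abs_of_nonpos (sub_nonpos.2 hs.2), neg_sub]
    rw [setIntegral_congr_fun measurableSet_Ioc hsign, ← intervalIntegral.integral_of_le ha.le,
      intervalIntegral.integral_eq_sub_of_hasDerivAt_of_le ha.le hcont.continuousOn
        (fun s hs => hasDerivAt_rpow_mul_exp_neg a hs.1)
        ((intervalIntegrable_iff_integrableOn_Ioc_of_le ha.le).2 hint_left),
      zero_rpow ha.ne', zero_mul, sub_zero]
  have hright : ∫ s in Ioi a, s ^ (a - 1) * exp (-s) * |s - a| = a ^ a * exp (-a) := by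
    have hlim : Tendsto (fun s => s ^ a * exp (-s)) atTop (𝓝 0) := by
      simpa only [neg_mul, one_mul] using tendsto_rpow_mul_exp_neg_mul_atTop_nhds_zero a 1 one_pos
    have hsign : EqOn (fun s : ℝ => s ^ (a - 1) * exp (-s) * |s - a|)
        (fun s => -(s ^ (a - 1) * exp (-s) * (a - s))) (Ioi a) := fun s hs => by
      simp only [abs_of_nonneg (sub_nonneg.2 (mem_Ioi.1 hs).le), ← mul_neg, neg_sub]
    rw [setIntegral_congr_fun measurableSet_Ioi hsign, integral_neg,
      integral_Ioi_of_hasDerivAt_of_tendsto hcont.continuousWithinAt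
        (fun s hs => hasDerivAt_rpow_mul_exp_neg a (ha.trans hs)) hint_right hlim,
      zero_sub, neg_neg]
  have habs : IntegrableOn (fun s => s ^ (a - 1) * exp (-s) * |s - a|) (Ioi 0) := by
    refine IntegrableOn.congr_fun hint.abs (fun s hs => ?_) measurableSet_Ioi
    have hs0 : 0 < s := hs
    simp only [abs_mul, abs_sub_comm a s, abs_exp, abs_of_pos (rpow_pos_of_pos hs0 _)]
  rw [← Ioc_union_Ioi_eq_Ioi ha.le, setIntegral_union (Ioc_disjoint_Ioi le_rfl) measurableSet_Ioi
    (habs.mono_set Ioc_subset_Ioi_self) (habs.mono_set (Ioi_subset_Ioi ha.le)), hleft, hright,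
    two_mul]

end GammaFunction

section GaussianDerivatives

variable {d : ℕ}

lemma continuous_gaussD (y : ℝ) : Continuous (gaussD d y) := by
  unfold gaussD
  fun_prop

lemma hasDerivAt_div_two_mul (a : ℝ) {y : ℝ} (hy : 0 < y) :
    HasDerivAt (fun u => a / (2 * u)) (-(a / (2 * y)) / y) y := by
  refine (((hasDerivAt_inv hy.ne').const_mul (a / 2)).congr_deriv ?_).congr_of_eventuallyEq
    (.of_forall fun u => ?_)
  · field_simp
  · ring

lemma hasDerivAt_gaussD (x : EuclideanSpace ℝ (Fin d)) {y : ℝ} (hy : 0 < y) :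
    HasDerivAt (gaussD d · x) (gaussD d y x / y * (‖x‖ ^ 2 / (2 * y) - d / 2)) y := by
  have hpow : HasDerivAt (fun u => (2 * π * u) ^ (-(d : ℝ) / 2))
      (2 * π * (-(d : ℝ) / 2) * (2 * π * y) ^ (-(d : ℝ) / 2 - 1)) y := by
    simpa using ((hasDerivAt_id y).const_mul (2 * π)).rpow_const (p := -(d : ℝ) / 2)
      (Or.inl (by positivity))
  have hexp := (hasDerivAt_div_two_mul (-‖x‖ ^ 2) hy).exp
  refine (hpow.mul hexp).congr_deriv ?_
  rw [rpow_sub_one (by positivity), gaussD]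
  field_simp
  ring

lemma integral_gaussD {y : ℝ} (hy : 0 < y) : ∫ x, gaussD d y x = 1 := by
  have hexp (x : EuclideanSpace ℝ (Fin d)) : -‖x‖ ^ 2 / (2 * y) = -(2 * y)⁻¹ * ‖x‖ ^ 2 := by
    ring
  simp only [gaussD, hexp, integral_const_mul]
  rw [GaussianFourier.integral_rexp_neg_mul_sq_norm (by positivity), finrank_euclideanSpace,
    Fintype.card_fin, div_inv_eq_mul, neg_div, rpow_neg (by positivity),
    show π * (2 * y) = 2 * π * y by ring]
  exact inv_mul_cancel₀ (by positivity)

/- Completing the square: conditionally on the sum `x` of independent centered Gaussians with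
variances `v` and `u`, the first one is Gaussian with mean `v x / (u + v)`. -/
lemma gaussD_mul_gaussD_sub {u v : ℝ} (hu : 0 < u) (hv : 0 < v) (x z : EuclideanSpace ℝ (Fin d)) :
    gaussD d v z * gaussD d u (x - z) =
      gaussD d (u + v) x * gaussD d (u * v / (u + v)) (z - (v / (u + v)) • x) := by
  have hpow : (2 * π * v) ^ (-(d : ℝ) / 2) * (2 * π * u) ^ (-(d : ℝ) / 2) =
      (2 * π * (u + v)) ^ (-(d : ℝ) / 2) * (2 * π * (u * v / (u + v))) ^ (-(d : ℝ) / 2) := by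
    rw [← mul_rpow (by positivity) (by positivity), ← mul_rpow (by positivity) (by positivity)]
    congr 1
    field_simp
  have hsq : -‖z‖ ^ 2 / (2 * v) + -‖x - z‖ ^ 2 / (2 * u) = -‖x‖ ^ 2 / (2 * (u + v)) +
      -‖z - (v / (u + v)) • x‖ ^ 2 / (2 * (u * v / (u + v))) := by
    rw [norm_sub_sq_real, norm_sub_sq_real, inner_smul_right, norm_smul, real_inner_comm z x,
      norm_of_nonneg (by positivity)]
    field_simp
    ring
  simp only [gaussD]
  rw [mul_mul_mul_comm, hpow, ← exp_add, hsq, exp_add, mul_mul_mul_comm]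

lemma gaussD_convolution {u v : ℝ} (hu : 0 < u) (hv : 0 < v) :
    gaussD d v ⋆[mul ℝ ℝ] gaussD d u = gaussD d (u + v) := by
  funext x
  simp only [convolution_mul, gaussD_mul_gaussD_sub hu hv, integral_const_mul]
  rw [integral_sub_right_eq_self (gaussD d (u * v / (u + v))), integral_gaussD (by positivity),
    mul_one]

/-- The polynomials `Pₙ` for which, when `a = d / 2`, the `n`-th derivative of the Gaussian density
`n_y` with respect to `y` is `y⁻ⁿ n_y(x) Pₙ(‖x‖² / (2y))`. Up to the factor `(-1)ⁿ n!` they are the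
generalized Laguerre polynomials of parameter `a - 1`. -/
noncomputable def heatPoly (a : ℝ) : ℕ → ℝ[X]
  | 0 => 1
  | n + 1 => (X - C (a + n)) * heatPoly a n - X * derivative (heatPoly a n)

/-- The `n`-th derivative of the Gaussian density with respect to its variance `y`, given by an
explicit formula so that its regularity and decay in `x` can be read off. -/
noncomputable def gaussDeriv (d n : ℕ) (y : ℝ) (x : EuclideanSpace ℝ (Fin d)) : ℝ :=
  gaussD d y x / y ^ n * (heatPoly (d / 2) n).eval (‖x‖ ^ 2 / (2 * y))

lemma gaussDeriv_zero (y : ℝ) : gaussDeriv d 0 y = gaussD d y := by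
  funext x
  simp [gaussDeriv, heatPoly]

lemma gaussDeriv_one (y : ℝ) (x : EuclideanSpace ℝ (Fin d)) :
    gaussDeriv d 1 y x = gaussD d y x / y * (‖x‖ ^ 2 / (2 * y) - d / 2) := by
  simp [gaussDeriv, heatPoly]

lemma gaussDy_eq_gaussDeriv_one {y : ℝ} (hy : 0 < y) : gaussDy d y = gaussDeriv d 1 y := by
  funext x
  rw [gaussDeriv_one]
  exact (hasDerivAt_gaussD x hy).deriv

lemma continuous_gaussDeriv (n : ℕ) (y : ℝ) : Continuous (gaussDeriv d n y) := by
  unfold gaussDeriv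
  have := continuous_gaussD (d := d) y
  fun_prop

lemma measurable_gaussDeriv (n : ℕ) :
    Measurable fun p : ℝ × EuclideanSpace ℝ (Fin d) => gaussDeriv d n p.1 p.2 := by
  unfold gaussDeriv gaussD
  fun_prop

lemma hasDerivAt_gaussDeriv (n : ℕ) (x : EuclideanSpace ℝ (Fin d)) {y : ℝ} (hy : 0 < y) :
    HasDerivAt (gaussDeriv d n · x) (gaussDeriv d (n + 1) y x) y := by
  have hpoly := ((heatPoly (d / 2) n).hasDerivAt (‖x‖ ^ 2 / (2 * y))).comp y
    (hasDerivAt_div_two_mul (‖x‖ ^ 2) hy)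
  refine (((hasDerivAt_gaussD x hy).div (hasDerivAt_pow n y) (by positivity)).mul
    hpoly).congr_deriv ?_
  have hpow : n * y ^ (n - 1) = n * y ^ n / y := by
    rcases n with _ | n
    · simp
    · rw [Nat.add_sub_cancel, pow_succ, ← mul_assoc, mul_div_cancel_right₀ _ hy.ne']
  simp only [gaussDeriv, heatPoly, hpow, eval_sub, eval_mul, eval_X, eval_C, Function.comp_apply,
    Pi.div_apply]
  generalize ‖x‖ ^ 2 / (2 * y) = s
  field_simp
  ring

lemma exists_abs_eval_le_mul_exp (p : ℝ[X]) {c : ℝ} (hc : 0 < c) :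
    ∃ M, 0 ≤ M ∧ ∀ s, 0 ≤ s → |p.eval s| ≤ M * exp (c * s) := by
  induction p using Polynomial.induction_on' with
  | add p q hp hq =>
    obtain ⟨Mp, hMp, hp⟩ := hp
    obtain ⟨Mq, hMq, hq⟩ := hq
    refine ⟨Mp + Mq, by positivity, fun s hs => ?_⟩
    rw [eval_add, add_mul]
    exact (abs_add_le _ _).trans (add_le_add (hp s hs) (hq s hs))
  | monomial n a =>
    refine ⟨|a| * (n.factorial / c ^ n), by positivity, fun s hs => ?_⟩
    have hexp := pow_div_factorial_le_exp (c * s) (by positivity) n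
    rw [div_le_iff₀ (by positivity), mul_pow] at hexp
    rw [eval_monomial, abs_mul, abs_of_nonneg (pow_nonneg hs n), mul_assoc]
    gcongr
    rw [div_mul_eq_mul_div, le_div_iff₀ (by positivity)]
    linarith

lemma exists_norm_gaussDeriv_le (d n : ℕ) {a : ℝ} (ha : 0 < a) :
    ∃ M, 0 ≤ M ∧ ∀ y, a ≤ y → ∀ x, ‖gaussDeriv d n y x‖ ≤ M * exp (-(4 * y)⁻¹ * ‖x‖ ^ 2) := by
  obtain ⟨M, hM, hle⟩ := exists_abs_eval_le_mul_exp (heatPoly (d / 2) n) one_half_pos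
  refine ⟨(2 * π * a) ^ (-(d : ℝ) / 2) / a ^ n * M, by positivity, fun y hy x => ?_⟩
  have hy0 : 0 < y := ha.trans_le hy
  have hpow : (2 * π * y) ^ (-(d : ℝ) / 2) ≤ (2 * π * a) ^ (-(d : ℝ) / 2) :=
    rpow_le_rpow_of_nonpos (by positivity) (by gcongr)
      (div_nonpos_of_nonpos_of_nonneg (by simp) zero_le_two)
  calc ‖gaussDeriv d n y x‖
      = (2 * π * y) ^ (-(d : ℝ) / 2) / y ^ n * exp (-‖x‖ ^ 2 / (2 * y)) *
          |(heatPoly (d / 2) n).eval (‖x‖ ^ 2 / (2 * y))| := by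
        rw [gaussDeriv, gaussD, norm_mul, norm_of_nonneg (by positivity), norm_eq_abs,
          mul_div_right_comm]
    _ ≤ (2 * π * a) ^ (-(d : ℝ) / 2) / a ^ n * exp (-‖x‖ ^ 2 / (2 * y)) *
          (M * exp (1 / 2 * (‖x‖ ^ 2 / (2 * y)))) := by
        gcongr
        exact hle _ (by positivity)
    _ = (2 * π * a) ^ (-(d : ℝ) / 2) / a ^ n * M *
          exp (-‖x‖ ^ 2 / (2 * y) + 1 / 2 * (‖x‖ ^ 2 / (2 * y))) := by
        rw [exp_add]
        ring
    _ = _ := by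
        congr 2
        field_simp
        ring

lemma exists_norm_gaussDeriv_le_const (d n : ℕ) {a : ℝ} (ha : 0 < a) :
    ∃ M, ∀ y, a ≤ y → ∀ x, ‖gaussDeriv d n y x‖ ≤ M := by
  obtain ⟨M, hM, hle⟩ := exists_norm_gaussDeriv_le d n ha
  refine ⟨M, fun y hy x => (hle y hy x).trans (mul_le_of_le_one_right hM ?_)⟩
  have hy0 : 0 < y := ha.trans_le hy
  rw [exp_le_one_iff, neg_mul, neg_nonpos]
  positivity

lemma integrable_gaussDeriv (n : ℕ) {y : ℝ} (hy : 0 < y) : Integrable (gaussDeriv d n y) := by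
  obtain ⟨M, -, hle⟩ := exists_norm_gaussDeriv_le d n hy
  have hexp : Integrable fun x : EuclideanSpace ℝ (Fin d) => exp (-(4 * y)⁻¹ * ‖x‖ ^ 2) := by
    refine .of_integral_ne_zero ?_
    rw [GaussianFourier.integral_rexp_neg_mul_sq_norm (by positivity)]
    positivity
  exact (hexp.const_mul M).mono' (continuous_gaussDeriv n y).aestronglyMeasurable
    (.of_forall (hle y le_rfl))

lemma hasDerivAt_convolution_gaussDeriv {ν : Measure (EuclideanSpace ℝ (Fin d))}
    {g : EuclideanSpace ℝ (Fin d) → ℝ} (hg : Integrable g ν) (n : ℕ)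
    (x : EuclideanSpace ℝ (Fin d)) {y : ℝ} (hy : 0 < y) :
    HasDerivAt (fun u => (g ⋆[mul ℝ ℝ, ν] gaussDeriv d n u) x)
      ((g ⋆[mul ℝ ℝ, ν] gaussDeriv d (n + 1) y) x) y := by
  obtain ⟨M, hM⟩ := exists_norm_gaussDeriv_le_const d n (half_pos hy)
  obtain ⟨M', hM'⟩ := exists_norm_gaussDeriv_le_const d (n + 1) (half_pos hy)
  have hmeas (k : ℕ) (u : ℝ) : AEStronglyMeasurable (fun t => gaussDeriv d k u (x - t)) ν :=
    ((continuous_gaussDeriv k u).comp (continuous_sub_left x)).aestronglyMeasurable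
  simp only [convolution_mul]
  refine (hasDerivAt_integral_of_dominated_loc_of_deriv_le
    (F := fun u t => g t * gaussDeriv d n u (x - t))
    (F' := fun u t => g t * gaussDeriv d (n + 1) u (x - t)) (bound := fun t => ‖g t‖ * M')
    (Ici_mem_nhds (half_lt_self hy)) (.of_forall fun u => hg.aestronglyMeasurable.mul (hmeas n u))
    (hg.mul_bdd (hmeas n y) (.of_forall fun t => hM y (half_le_self hy.le) _))
    (hg.aestronglyMeasurable.mul (hmeas (n + 1) y)) (.of_forall fun t u hu => ?_)
    (hg.norm.mul_const M') (.of_forall fun t u hu => ?_)).2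
  · rw [norm_mul]
    exact mul_le_mul_of_nonneg_left (hM' u hu _) (norm_nonneg _)
  · exact (hasDerivAt_gaussDeriv n (x - t) ((half_pos hy).trans_le hu)).const_mul (g t)

lemma convolution_gaussDeriv_succ {f : EuclideanSpace ℝ (Fin d) → ℝ} (hf : Integrable f) {u : ℝ}
    (hu : 0 < u) {n k : ℕ}
    (h : ∀ v, 0 < v → f ⋆[mul ℝ ℝ] gaussDeriv d n v = gaussDeriv d k (u + v)) {v : ℝ}
    (hv : 0 < v) : f ⋆[mul ℝ ℝ] gaussDeriv d (n + 1) v = gaussDeriv d (k + 1) (u + v) := by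
  funext x
  refine (hasDerivAt_convolution_gaussDeriv hf n x hv).unique ?_
  refine ((hasDerivAt_gaussDeriv k x (add_pos hu hv)).comp_const_add u v).congr_of_eventuallyEq ?_
  filter_upwards [lt_mem_nhds hv] with w hw
  rw [h w hw]

lemma gaussDeriv_convolution (m n : ℕ) {u v : ℝ} (hu : 0 < u) (hv : 0 < v) :
    gaussDeriv d m u ⋆[mul ℝ ℝ] gaussDeriv d n v = gaussDeriv d (m + n) (u + v) := by
  induction n generalizing v with
  | succ n ih => exact convolution_gaussDeriv_succ (integrable_gaussDeriv m hu) hu (fun _ => ih) hv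
  | zero =>
    induction m generalizing u with
    | zero => simp only [gaussDeriv_zero, add_zero, add_comm u v, gaussD_convolution hv hu]
    | succ m ih =>
      rw [convolution_mul_comm, add_comm u v, add_zero]
      refine convolution_gaussDeriv_succ (integrable_gaussDeriv 0 hv) hv (fun w hw => ?_) hu
      rw [convolution_mul_comm, ih hw, add_comm v w, add_zero]

end GaussianDerivatives

section DetailConstant

variable {d : ℕ}

lemma integral_Ioi_rpow_mul_comp_sq_div (a : ℝ) {c : ℝ} (hc : 0 < c) (g : ℝ → ℝ) :
    ∫ ρ in Ioi 0, ρ ^ (a - 1) * g (ρ ^ 2 / c) =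
      c ^ (a / 2) / 2 * ∫ s in Ioi 0, s ^ (a / 2 - 1) * g s := by
  have hscale := integral_comp_mul_left_Ioi (fun s => s ^ (a / 2 - 1) * g s) 0 (inv_pos.2 hc)
  have hsq := integral_comp_rpow_Ioi_of_pos (p := 2)
    (g := fun t => (c⁻¹ * t) ^ (a / 2 - 1) * g (c⁻¹ * t)) two_pos
  rw [mul_zero, inv_inv, smul_eq_mul] at hscale
  have hint : EqOn (fun ρ : ℝ => (2 * ρ ^ ((2 : ℝ) - 1)) •
      ((c⁻¹ * ρ ^ (2 : ℝ)) ^ (a / 2 - 1) * g (c⁻¹ * ρ ^ (2 : ℝ))))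
      (fun ρ => 2 * c⁻¹ ^ (a / 2 - 1) * (ρ ^ (a - 1) * g (ρ ^ 2 / c))) (Ioi 0) := by
    intro ρ hρ
    have hρ0 : 0 < ρ := hρ
    have hpow : ρ * (ρ ^ 2) ^ (a / 2 - 1) = ρ ^ (a - 1) := by
      rw [mul_comm, ← rpow_natCast_mul hρ0.le, ← rpow_add_one hρ0.ne']
      push_cast
      ring_nf
    simp only [rpow_two, smul_eq_mul, inv_mul_eq_div]
    rw [← inv_mul_eq_div c, mul_rpow (by positivity) (by positivity), ← hpow]
    norm_num
    ring
  rw [setIntegral_congr_fun measurableSet_Ioi hint, integral_const_mul, hscale, inv_rpow hc.le,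
    rpow_sub_one hc.ne', inv_div] at hsq
  field_simp at hsq ⊢
  linarith

/-- The factor by which the definition of the detail at scale `r` multiplies `r² ‖μ * ∂n_y‖₁`; it is
the reciprocal of the norm of `y ∂n_y`, which does not depend on `y`. -/
noncomputable def detailConst (d : ℕ) : ℝ :=
  Gamma ((d : ℝ) / 2) / 2 * ((d : ℝ) / (2 * exp 1)) ^ (-(d : ℝ) / 2)

lemma detailConst_pos [NeZero d] : 0 < detailConst d := by
  have hd : (0 : ℝ) < d := Nat.cast_pos.2 (NeZero.pos d)
  have := Gamma_pos_of_pos (half_pos hd)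
  unfold detailConst
  positivity

lemma four_div_detailConst (d : ℕ) :
    4 / detailConst d = 8 / Gamma ((d : ℝ) / 2) * ((d : ℝ) / (2 * exp 1)) ^ ((d : ℝ) / 2) := by
  rw [detailConst, neg_div, rpow_neg (by positivity), ← div_eq_mul_inv, div_div_eq_mul_div,
    div_div_eq_mul_div]
  ring

lemma one_le_four_div_detailConst [NeZero d] : 1 ≤ 4 / detailConst d := by
  have hd : (0 : ℝ) < d := Nat.cast_pos.2 (NeZero.pos d)
  rw [four_div_detailConst, div_mul_eq_mul_div, one_le_div (Gamma_pos_of_pos (half_pos hd))]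
  refine (Gamma_natCast_div_two_le (NeZero.one_le (n := d))).trans ?_
  gcongr
  exact sqrt_two_mul_pi_mul_exp_one_le

lemma integral_gaussD_mul_comp [NeZero d] {y : ℝ} (hy : 0 < y) (g : ℝ → ℝ) :
    ∫ x, gaussD d y x * g (‖x‖ ^ 2 / (2 * y)) =
      (Gamma (d / 2))⁻¹ * ∫ s in Ioi 0, s ^ ((d : ℝ) / 2 - 1) * exp (-s) * g s := by
  have hd : (0 : ℝ) < d := Nat.cast_pos.2 (NeZero.pos d)
  have hradial (ρ : ℝ) : ρ ^ (d - 1) • ((2 * π * y) ^ (-(d : ℝ) / 2) * exp (-ρ ^ 2 / (2 * y)) *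
      g (ρ ^ 2 / (2 * y))) = (2 * π * y) ^ (-(d : ℝ) / 2) *
        (ρ ^ ((d : ℝ) - 1) * (exp (-(ρ ^ 2 / (2 * y))) * g (ρ ^ 2 / (2 * y)))) := by
    rw [smul_eq_mul, ← rpow_natCast, Nat.cast_pred (NeZero.pos d), neg_div (2 * y)]
    ring
  have hπ : √π ^ d = π ^ ((d : ℝ) / 2) := by
    rw [sqrt_eq_rpow, ← rpow_mul_natCast pi_pos.le, one_div_mul_eq_div]
  have hpow : (2 * π * y) ^ (-(d : ℝ) / 2) = (π ^ ((d : ℝ) / 2) * (2 * y) ^ ((d : ℝ) / 2))⁻¹ := by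
    rw [← mul_rpow (by positivity) (by positivity), neg_div, rpow_neg (by positivity)]
    ring_nf
  have := Gamma_pos_of_pos (half_pos hd)
  simp only [gaussD]
  rw [integral_fun_norm_addHaar volume
    fun ρ => (2 * π * y) ^ (-(d : ℝ) / 2) * exp (-ρ ^ 2 / (2 * y)) * g (ρ ^ 2 / (2 * y))]
  simp only [finrank_euclideanSpace, Fintype.card_fin, hradial, integral_const_mul]
  rw [integral_Ioi_rpow_mul_comp_sq_div (d : ℝ) (by positivity : 0 < 2 * y)
      fun s => exp (-s) * g s,
    measureReal_def, EuclideanSpace.volume_ball, Fintype.card_fin, ENNReal.ofReal_one, one_pow,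
    one_mul, ENNReal.toReal_ofReal (by positivity), Gamma_add_one (by positivity), hπ, hpow]
  simp only [nsmul_eq_mul, smul_eq_mul, mul_assoc]
  field_simp

lemma integral_norm_gaussDeriv_one [NeZero d] {y : ℝ} (hy : 0 < y) :
    ∫ x, ‖gaussDeriv d 1 y x‖ = (detailConst d * y)⁻¹ := by
  have hd : (0 : ℝ) < d := Nat.cast_pos.2 (NeZero.pos d)
  have hnorm (x : EuclideanSpace ℝ (Fin d)) : ‖gaussDeriv d 1 y x‖ =
      gaussD d y x * |‖x‖ ^ 2 / (2 * y) - d / 2| * y⁻¹ := by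
    have : 0 ≤ gaussD d y x := by
      unfold gaussD
      positivity
    rw [gaussDeriv_one, norm_mul, norm_of_nonneg (by positivity), norm_eq_abs]
    ring
  simp only [hnorm, integral_mul_const]
  rw [integral_gaussD_mul_comp hy fun s => |s - d / 2|,
    integral_rpow_mul_exp_neg_mul_abs_sub (half_pos hd), detailConst, neg_div,
    rpow_neg (by positivity), ← div_div (d : ℝ), div_rpow (by positivity) (exp_pos 1).le,
    exp_one_rpow, exp_neg]
  field_simp

end DetailConstant

section Detail

variable {d : ℕ} {μ μ₁ μ₂ : Measure (EuclideanSpace ℝ (Fin d))}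
  [IsFiniteMeasure μ] [IsFiniteMeasure μ₁] [IsFiniteMeasure μ₂]

omit [IsFiniteMeasure μ] in
lemma detail_nonneg (r : ℝ) : 0 ≤ detail d μ r := by
  have : 0 ≤ Gamma ((d : ℝ) / 2) := Gamma_nonneg_of_nonneg (by positivity)
  unfold detail
  positivity

omit [IsFiniteMeasure μ] in
lemma detail_sqrt {y : ℝ} (hy : 0 < y) :
    detail d μ √y = detailConst d * y * ∫ x, ‖mollify (gaussDeriv d 1 y) μ x‖ := by
  rw [detail, sq_sqrt hy.le, gaussDy_eq_gaussDeriv_one hy, detailConst]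
  simp only [mollify, norm_eq_abs]
  ring

lemma detail_le_measureReal_univ [NeZero d] {r : ℝ} (hr : 0 < r) :
    detail d μ r ≤ μ.real univ := by
  have hy : 0 < r ^ 2 := by positivity
  have hc := detailConst_pos (d := d)
  have hle := integral_norm_mollify_le (μ := μ) (integrable_gaussDeriv (d := d) 1 hy)
  rw [integral_norm_gaussDeriv_one hy, ← div_eq_mul_inv, le_div_iff₀' (by positivity)] at hle
  rw [← sqrt_sq hr.le, detail_sqrt hy]
  exact hle

lemma hasDerivAt_mollify_gaussDeriv (n : ℕ) (x : EuclideanSpace ℝ (Fin d)) {y : ℝ} (hy : 0 < y) :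
    HasDerivAt (fun u => mollify (gaussDeriv d n u) μ x) (mollify (gaussDeriv d (n + 1) y) μ x)
      y := by
  simp only [mollify_eq_convolution]
  exact hasDerivAt_convolution_gaussDeriv (integrable_const 1) n x hy

lemma stronglyMeasurable_mollify_gaussDeriv (n : ℕ) :
    StronglyMeasurable fun p : EuclideanSpace ℝ (Fin d) × ℝ => mollify (gaussDeriv d n p.2) μ p.1 :=
  StronglyMeasurable.integral_prod_right'
    (f := fun q : (EuclideanSpace ℝ (Fin d) × ℝ) × EuclideanSpace ℝ (Fin d) =>
      gaussDeriv d n q.1.2 (q.1.1 - q.2))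
    ((measurable_gaussDeriv n).comp (by fun_prop : Measurable fun q :
      (EuclideanSpace ℝ (Fin d) × ℝ) × EuclideanSpace ℝ (Fin d) =>
        (q.1.2, q.1.1 - q.2))).stronglyMeasurable

lemma mollify_gaussDeriv_conv (m n : ℕ) {u v : ℝ} (hu : 0 < u) (hv : 0 < v) :
    mollify (gaussDeriv d (m + n) (u + v)) (μ₁ ∗ μ₂) =
      mollify (gaussDeriv d m u) μ₁ ⋆[mul ℝ ℝ] mollify (gaussDeriv d n v) μ₂ := by
  obtain ⟨Mu, hMu⟩ := exists_norm_gaussDeriv_le_const d m hu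
  obtain ⟨Mv, hMv⟩ := exists_norm_gaussDeriv_le_const d n hv
  rw [← gaussDeriv_convolution m n hu hv]
  exact mollify_convolution_conv (integrable_gaussDeriv m hu) (integrable_gaussDeriv n hv)
    (continuous_gaussDeriv m u).stronglyMeasurable (continuous_gaussDeriv n v).stronglyMeasurable
    (hMu u le_rfl) (hMv v le_rfl)

lemma integral_norm_mollify_gaussDeriv_two_conv_le [NeZero d] {y : ℝ} (hy : 0 < y) :
    ∫ x, ‖mollify (gaussDeriv d 2 y) (μ₁ ∗ μ₂) x‖ ≤
      4 / detailConst d ^ 2 * (detail d μ₁ √(y / 2) * detail d μ₂ √(y / 2)) * y ^ (-2 : ℤ) := by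
  have hy2 := half_pos hy
  have hc := detailConst_pos (d := d)
  have hconv := mollify_gaussDeriv_conv (μ₁ := μ₁) (μ₂ := μ₂) 1 1 hy2 hy2
  rw [add_halves] at hconv
  calc ∫ x, ‖mollify (gaussDeriv d 2 y) (μ₁ ∗ μ₂) x‖
      ≤ (∫ x, ‖mollify (gaussDeriv d 1 (y / 2)) μ₁ x‖) *
          ∫ x, ‖mollify (gaussDeriv d 1 (y / 2)) μ₂ x‖ := by
        rw [hconv]
        exact integral_norm_convolution_mul_le (integrable_mollify (integrable_gaussDeriv 1 hy2))
          (integrable_mollify (integrable_gaussDeriv 1 hy2))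
    _ = _ := by
        rw [detail_sqrt hy2, detail_sqrt hy2]
        field_simp
        ring

lemma detail_conv_sqrt_le [NeZero d] {a b A : ℝ} (ha : 0 < a) (hab : a ≤ b) (hA : 0 ≤ A)
    (h : ∀ y ∈ Ioc a b, detail d μ₁ √(y / 2) * detail d μ₂ √(y / 2) ≤ A) :
    detail d (μ₁ ∗ μ₂) √a ≤ a / b * detail d (μ₁ ∗ μ₂) √b + 4 / detailConst d * A := by
  have hb := ha.trans_le hab
  have hc := detailConst_pos (d := d)
  have hpos {y : ℝ} (hy : y ∈ Icc a b) : 0 < y := ha.trans_le hy.1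
  have h0 : (0 : ℝ) ∉ uIcc a b := fun h0 => (hpos (uIcc_of_le hab ▸ h0)).false
  have hint : ∫ y in Ioc a b, 4 / detailConst d ^ 2 * A * y ^ (-2 : ℤ) =
      4 / detailConst d ^ 2 * A * (a⁻¹ - b⁻¹) := by
    rw [integral_const_mul, ← intervalIntegral.integral_of_le hab,
      integral_zpow (.inr ⟨by norm_num, h0⟩)]
    norm_num only [zpow_neg_one]
    ring
  have hmain := integral_norm_le_add_of_hasDerivAt (m := volume)
    (f := fun y => mollify (gaussDeriv d 1 y) (μ₁ ∗ μ₂))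
    (f' := fun y => mollify (gaussDeriv d 2 y) (μ₁ ∗ μ₂))
    (B := fun y => 4 / detailConst d ^ 2 * A * y ^ (-2 : ℤ)) hab
    (fun x y hy => hasDerivAt_mollify_gaussDeriv 1 x (hpos hy))
    (fun x y hy => (hasDerivAt_mollify_gaussDeriv 2 x (hpos hy)).continuousAt.continuousWithinAt)
    (stronglyMeasurable_mollify_gaussDeriv 2).aestronglyMeasurable
    (integrable_mollify (integrable_gaussDeriv 1 ha))
    (integrable_mollify (integrable_gaussDeriv 1 hb))
    (fun y hy => integrable_mollify (integrable_gaussDeriv 2 (ha.trans hy.1)))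
    ((intervalIntegral.intervalIntegrable_zpow (.inr h0)).1.const_mul _) fun y hy => by
      have hy0 := ha.trans hy.1
      refine (integral_norm_mollify_gaussDeriv_two_conv_le hy0).trans ?_
      gcongr
      exact h y hy
  rw [hint] at hmain
  rw [detail_sqrt ha, detail_sqrt hb]
  set Na := ∫ x, ‖mollify (gaussDeriv d 1 a) (μ₁ ∗ μ₂) x‖
  set Nb := ∫ x, ‖mollify (gaussDeriv d 1 b) (μ₁ ∗ μ₂) x‖
  calc detailConst d * a * Na
      ≤ detailConst d * a * (Nb + 4 / detailConst d ^ 2 * A * a⁻¹) := by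
        gcongr
        refine hmain.trans ?_
        gcongr
        exact sub_le_self _ (inv_nonneg.2 hb.le)
    _ = a / b * (detailConst d * b * Nb) + 4 / detailConst d * A := by field_simp

omit [IsFiniteMeasure μ₁] in
lemma measureReal_conv_univ : (μ₁ ∗ μ₂).real univ = μ₁.real univ * μ₂.real univ := by
  rw [Measure.conv, map_measureReal_apply measurable_add .univ, preimage_univ,
    ← univ_prod_univ, measureReal_prod_prod]

lemma detail_conv_le [NeZero d] {r S α₁ α₂ : ℝ} (hr : 0 < r) (hS : 0 < S) (hα₁ : 0 ≤ α₁)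
    (hα₂ : 0 ≤ α₂) (h : ∀ t ∈ Icc (r / √2) S, detail d μ₁ t ≤ α₁ ∧ detail d μ₂ t ≤ α₂) :
    detail d (μ₁ ∗ μ₂) r ≤ 4 / detailConst d * (α₁ * α₂) +
      r ^ 2 / (2 * S ^ 2) * (μ₁.real univ * μ₂.real univ) := by
  have hc := detailConst_pos (d := d)
  rw [← measureReal_conv_univ]
  rcases le_total (r ^ 2) (2 * S ^ 2) with hrS | hSr
  · have hb : 0 < √(2 * S ^ 2) := by positivity
    calc detail d (μ₁ ∗ μ₂) r
        = detail d (μ₁ ∗ μ₂) √(r ^ 2) := by rw [sqrt_sq hr.le]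
      _ ≤ r ^ 2 / (2 * S ^ 2) * detail d (μ₁ ∗ μ₂) √(2 * S ^ 2) +
            4 / detailConst d * (α₁ * α₂) := by
          refine detail_conv_sqrt_le (by positivity) hrS (by positivity) fun y hy => ?_
          have ht : √(y / 2) ∈ Icc (r / √2) S := by
            constructor
            · refine le_sqrt_of_sq_le ?_
              rw [div_pow, sq_sqrt zero_le_two]
              linarith [hy.1]
            · exact sqrt_le_iff.2 ⟨hS.le, by linarith [hy.2]⟩
          exact mul_le_mul (h _ ht).1 (h _ ht).2 (detail_nonneg _) hα₁
      _ ≤ _ := by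
          rw [add_comm]
          gcongr
          exact detail_le_measureReal_univ hb
  · calc detail d (μ₁ ∗ μ₂) r ≤ (μ₁ ∗ μ₂).real univ := detail_le_measureReal_univ hr
      _ ≤ r ^ 2 / (2 * S ^ 2) * (μ₁ ∗ μ₂).real univ :=
          le_mul_of_one_le_left measureReal_nonneg ((one_le_div (by positivity)).2 hSr)
      _ ≤ _ := le_add_of_nonneg_left (by positivity)

end Detail

lemma rpow_neg_one_div_two_sq {a : ℝ} (ha : 0 < a) : (a ^ (-(1 : ℝ) / 2)) ^ 2 = a⁻¹ := by
  rw [← rpow_mul_natCast ha.le, ← rpow_neg_one]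
  norm_num

theorem statement3_general {d : ℕ} (μ₁ μ₂ : Measure (EuclideanSpace ℝ (Fin d)))
    [IsFiniteMeasure μ₁] [IsFiniteMeasure μ₂]
    (r α₁ α₂ K : ℝ) (hr : 0 < r) (hα₁ : 0 < α₁) (hα₂ : 0 < α₂) (hK : 0 < K)
    (h : ∀ t ∈ Set.Icc (r / Real.sqrt 2) (K * α₁ ^ (-(1 : ℝ) / 2) * α₂ ^ (-(1 : ℝ) / 2) * r),
      detail d μ₁ t ≤ α₁ ∧ detail d μ₂ t ≤ α₂) :
    detail d (μ₁ ∗ μ₂) r ≤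
      (8 / Real.Gamma ((d : ℝ) / 2) * ((d : ℝ) / (2 * Real.exp 1)) ^ ((d : ℝ) / 2) *
        (1 + μ₁.real univ * μ₂.real univ / (2 * K ^ 2))) * α₁ * α₂ := by
  rcases eq_or_ne d 0 with rfl | hd
  · -- Mathlib sets `Γ 0 = 0`, so both sides vanish.
    simp [detail]
  have : NeZero d := ⟨hd⟩
  rw [← four_div_detailConst]
  calc detail d (μ₁ ∗ μ₂) r
      ≤ 4 / detailConst d * (α₁ * α₂) +
          r ^ 2 / (2 * (K * α₁ ^ (-(1 : ℝ) / 2) * α₂ ^ (-(1 : ℝ) / 2) * r) ^ 2) *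
            (μ₁.real univ * μ₂.real univ) :=
        detail_conv_le hr (by positivity) hα₁.le hα₂.le h
    _ = 4 / detailConst d * (α₁ * α₂) +
          1 * (μ₁.real univ * μ₂.real univ / (2 * K ^ 2) * (α₁ * α₂)) := by
        simp only [mul_pow, rpow_neg_one_div_two_sq hα₁, rpow_neg_one_div_two_sq hα₂]
        field_simp
    _ ≤ 4 / detailConst d * (α₁ * α₂) +
          4 / detailConst d * (μ₁.real univ * μ₂.real univ / (2 * K ^ 2) * (α₁ * α₂)) := by
        gcongr
        exact one_le_four_div_detailConst
    _ = _ := by ring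

theorem statement3 {d : ℕ} (μ₁ μ₂ : Measure (EuclideanSpace ℝ (Fin d)))
    [IsProbabilityMeasure μ₁] [IsProbabilityMeasure μ₂]
    (r α₁ α₂ K : ℝ) (hr : 0 < r) (hα₁ : 0 < α₁) (hα₂ : 0 < α₂) (hK : 1 < K)
    (h : ∀ t ∈ Set.Icc (r / Real.sqrt 2) (K * α₁ ^ (-(1 : ℝ) / 2) * α₂ ^ (-(1 : ℝ) / 2) * r),
      detail d μ₁ t ≤ α₁ ∧ detail d μ₂ t ≤ α₂) :
    detail d (μ₁ ∗ μ₂) r ≤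
      (8 / Real.Gamma ((d : ℝ) / 2) * ((d : ℝ) / (2 * Real.exp 1)) ^ ((d : ℝ) / 2) *
        (1 + 1 / (2 * K ^ 2))) * α₁ * α₂ := by
  simpa only [probReal_univ, mul_one] using
    statement3_general μ₁ μ₂ r α₁ α₂ K hr hα₁ hα₂ (zero_lt_one.trans hK) h
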